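/- Unconditional stability of the Douglas direction-splitting scheme for the heat equation in spherical coordinates: Let τ > 0, N ≥ 2, and let T^0, T^1, ..., T^N be smooth functions on the closed box B, each vanishing on the boundary ∂B, which satisfy for every n = 1, ..., N−1 the factorized scheme (I − (τ/2) D_rr)(I − (τ/2) D̂_θθ)(I − (τ/2) D̂_φφ)((T^{n+1} − T^n)/τ) = Δ((3/2)T^n − (1/2)T^{n−1}) − (1/2) Δ̂ (T^n − T^{n−1}) on B. Then τ Σ_{n=1}^{N−1} ‖T^{n+1} − T^n‖²_ω / τ² + (1/2) ‖∇T^N‖²_ω + (1/4) ( ‖∂_θ(T^N − T^{N−1})‖²_{ω1} + ‖∂_φ(T^N − T^{N−1})‖²_{ω2} ) ≤ (1/2) ‖∇T^1‖²_ω + (1/4) ( ‖∂_θ(T^1 − T^0)‖²_{ω1} + ‖∂_φ(T^1 − T^0)‖²_{ω2} ). -/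

import Mathlib

open MeasureTheory Real Set

noncomputable section

/-- Partial derivative in the radial direction. -/
def pr (u : ℝ → ℝ → ℝ → ℝ) (r θ φ : ℝ) : ℝ := deriv (fun s => u s θ φ) r

/-- Partial derivative in the θ direction. -/
def pt (u : ℝ → ℝ → ℝ → ℝ) (r θ φ : ℝ) : ℝ := deriv (fun s => u r s φ) θ

/-- Partial derivative in the φ direction. -/
def pp (u : ℝ → ℝ → ℝ → ℝ) (r θ φ : ℝ) : ℝ := deriv (fun s => u r θ s) φ

/-- `D_rr u = r⁻² ∂_r (r² ∂_r u)`. -/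
def Drr (u : ℝ → ℝ → ℝ → ℝ) : ℝ → ℝ → ℝ → ℝ := fun r θ φ =>
  (1 / r ^ 2) * pr (fun r' θ' φ' => r' ^ 2 * pr u r' θ' φ') r θ φ

/-- `D_θθ u = (r² sin θ)⁻¹ ∂_θ (sin θ ∂_θ u)`. -/
def Dtt (u : ℝ → ℝ → ℝ → ℝ) : ℝ → ℝ → ℝ → ℝ := fun r θ φ =>
  (1 / (r ^ 2 * Real.sin θ)) * pt (fun r' θ' φ' => Real.sin θ' * pt u r' θ' φ') r θ φ

/-- Modified operator `D̂_θθ u = (R1² sin θ)⁻¹ ∂_θ (sin θ ∂_θ u)`. -/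
def Dhtt (R1 : ℝ) (u : ℝ → ℝ → ℝ → ℝ) : ℝ → ℝ → ℝ → ℝ := fun r θ φ =>
  (1 / (R1 ^ 2 * Real.sin θ)) * pt (fun r' θ' φ' => Real.sin θ' * pt u r' θ' φ') r θ φ

/-- `D_φφ u = (r² sin² θ)⁻¹ ∂²_φ u`. -/
def Dpp (u : ℝ → ℝ → ℝ → ℝ) : ℝ → ℝ → ℝ → ℝ := fun r θ φ =>
  (1 / (r ^ 2 * Real.sin θ ^ 2)) * pp (pp u) r θ φ

/-- Modified operator `D̂_φφ u = (R1² sin² θ1)⁻¹ ∂²_φ u`. -/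
def Dhpp (R1 θone : ℝ) (u : ℝ → ℝ → ℝ → ℝ) : ℝ → ℝ → ℝ → ℝ := fun r θ φ =>
  (1 / (R1 ^ 2 * Real.sin θone ^ 2)) * pp (pp u) r θ φ

/-- Spherical Laplacian `Δ = D_rr + D_θθ + D_φφ`. -/
def lap (u : ℝ → ℝ → ℝ → ℝ) : ℝ → ℝ → ℝ → ℝ := fun r θ φ =>
  Drr u r θ φ + Dtt u r θ φ + Dpp u r θ φ

/-- Modified Laplacian `Δ̂ = D_rr + D̂_θθ + D̂_φφ`. -/
def laph (R1 θone : ℝ) (u : ℝ → ℝ → ℝ → ℝ) : ℝ → ℝ → ℝ → ℝ := fun r θ φ =>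
  Drr u r θ φ + Dhtt R1 u r θ φ + Dhpp R1 θone u r θ φ

/-- Weighted inner product `(u, v)_ω = ∫_B u v r² sin θ dr dθ dφ`. -/
def ipw (R1 R2 θ1 θ2 φ1 φ2 : ℝ) (u v : ℝ → ℝ → ℝ → ℝ) : ℝ :=
  ∫ r in Icc R1 R2, ∫ θ in Icc θ1 θ2, ∫ φ in Icc φ1 φ2,
    u r θ φ * v r θ φ * (r ^ 2 * Real.sin θ)

/-- Squared norm with a general nonnegative weight `w(r, θ)`:
`‖v‖²_w = ∫_B w v² dr dθ dφ`. -/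
def wnorm (R1 R2 θ1 θ2 φ1 φ2 : ℝ) (w : ℝ → ℝ → ℝ) (v : ℝ → ℝ → ℝ → ℝ) : ℝ :=
  ∫ r in Icc R1 R2, ∫ θ in Icc θ1 θ2, ∫ φ in Icc φ1 φ2,
    w r θ * (v r θ φ) ^ 2

/-- Spherical gradient energy `‖∇u‖²_ω`. -/
def gradE (R1 R2 θ1 θ2 φ1 φ2 : ℝ) (u : ℝ → ℝ → ℝ → ℝ) : ℝ :=
  ∫ r in Icc R1 R2, ∫ θ in Icc θ1 θ2, ∫ φ in Icc φ1 φ2,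
    ((pr u r θ φ) ^ 2 + (1 / r ^ 2) * (pt u r θ φ) ^ 2
      + (1 / (r * Real.sin θ) ^ 2) * (pp u r θ φ) ^ 2) * (r ^ 2 * Real.sin θ)

/-- The closed coordinate box `B = [R1,R2] × [θ1,θ2] × [φ1,φ2]`. -/
def SBox (R1 R2 θ1 θ2 φ1 φ2 : ℝ) : Set (ℝ × ℝ × ℝ) :=
  Icc R1 R2 ×ˢ Icc θ1 θ2 ×ˢ Icc φ1 φ2

/-- `u` is smooth (C^∞) up to the boundary of the closed box. -/
def SmoothOnBox (R1 R2 θ1 θ2 φ1 φ2 : ℝ) (u : ℝ → ℝ → ℝ → ℝ) : Prop :=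
  ContDiffOn ℝ (⊤ : ℕ∞) (fun p : ℝ × ℝ × ℝ => u p.1 p.2.1 p.2.2) (SBox R1 R2 θ1 θ2 φ1 φ2)

/-- `u` vanishes on the boundary `∂B` of the closed box. -/
def VanishOnBdry (R1 R2 θ1 θ2 φ1 φ2 : ℝ) (u : ℝ → ℝ → ℝ → ℝ) : Prop :=
  ∀ p ∈ frontier (SBox R1 R2 θ1 θ2 φ1 φ2), u p.1 p.2.1 p.2.2 = 0

/-- A subdomain of a spherical shell that is a coordinate box away from the polar axis. -/
structure Shell where
  R1 : ℝ
  R2 : ℝ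
  θ1 : ℝ
  θ2 : ℝ
  φ1 : ℝ
  φ2 : ℝ
  R1_pos : 0 < R1
  R_lt : R1 < R2
  θ1_pos : 0 < θ1
  θ_lt : θ1 < θ2
  θ2_lt_pi : θ2 < Real.pi
  φ_lt : φ1 < φ2

namespace Shell

variable (S : Shell) {F G K c : ℝ × ℝ × ℝ → ℝ} {p e d : ℝ × ℝ × ℝ}

/-- The closed coordinate box. -/
def box : Set (ℝ × ℝ × ℝ) := SBox S.R1 S.R2 S.θ1 S.θ2 S.φ1 S.φ2

/-- The open coordinate box. -/
def core : Set (ℝ × ℝ × ℝ) := Ioo S.R1 S.R2 ×ˢ Ioo S.θ1 S.θ2 ×ˢ Ioo S.φ1 S.φ2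

/-- Smoothness up to the boundary of the box. -/
@[fun_prop]
def Smooth (F : ℝ × ℝ × ℝ → ℝ) : Prop := ContDiffOn ℝ (⊤ : ℕ∞) F S.box

/-- Directional derivative relative to the closed box. -/
def D (e : ℝ × ℝ × ℝ) (F : ℝ × ℝ × ℝ → ℝ) (p : ℝ × ℝ × ℝ) : ℝ := fderivWithin ℝ F S.box p e

/-- Integral over the coordinate box. -/
def J (F : ℝ × ℝ × ℝ → ℝ) : ℝ := ∫ p in S.core, F p

/-- The radial coordinate direction. -/
abbrev er : ℝ × ℝ × ℝ := (1, 0, 0)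
/-- The polar coordinate direction. -/
abbrev eθ : ℝ × ℝ × ℝ := (0, 1, 0)
/-- The azimuthal coordinate direction. -/
abbrev eφ : ℝ × ℝ × ℝ := (0, 0, 1)

theorem core_subset_box : S.core ⊆ S.box := by
  rintro ⟨r, θ, φ⟩ ⟨h1, h2, h3⟩
  exact ⟨Ioo_subset_Icc_self h1, Ioo_subset_Icc_self h2, Ioo_subset_Icc_self h3⟩

theorem isOpen_core : IsOpen S.core := isOpen_Ioo.prod (isOpen_Ioo.prod isOpen_Ioo)

theorem isCompact_box : IsCompact S.box := isCompact_Icc.prod (isCompact_Icc.prod isCompact_Icc)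

theorem uniqueDiffOn_box : UniqueDiffOn ℝ S.box :=
  (uniqueDiffOn_Icc S.R_lt).prod ((uniqueDiffOn_Icc S.θ_lt).prod (uniqueDiffOn_Icc S.φ_lt))

theorem interior_box : interior S.box = S.core := by
  simp only [box, SBox, interior_prod_eq, interior_Icc, core]

theorem box_subset_closure_core : S.box ⊆ closure S.core := by
  simp only [core, closure_prod_eq, closure_Ioo S.R_lt.ne, closure_Ioo S.θ_lt.ne,
    closure_Ioo S.φ_lt.ne]
  exact subset_rfl

theorem radius_pos (hp : p ∈ S.box) : 0 < p.1 := S.R1_pos.trans_le hp.1.1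

theorem sin_pos (hp : p ∈ S.box) : 0 < Real.sin p.2.1 :=
  Real.sin_pos_of_pos_of_lt_pi (S.θ1_pos.trans_le hp.2.1.1) (hp.2.1.2.trans_lt S.θ2_lt_pi)

/-! ### Differentiation on the box -/

variable {S}

theorem Smooth.differentiableWithinAt (hF : S.Smooth F) (hp : p ∈ S.box) :
    DifferentiableWithinAt ℝ F S.box p :=
  hF.differentiableOn (by simp) p hp

@[fun_prop]
theorem Smooth.add (hF : S.Smooth F) (hG : S.Smooth G) : S.Smooth fun p => F p + G p :=
  ContDiffOn.add hF hG

@[fun_prop]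
theorem Smooth.sub (hF : S.Smooth F) (hG : S.Smooth G) : S.Smooth fun p => F p - G p :=
  ContDiffOn.sub hF hG

@[fun_prop]
theorem Smooth.mul (hF : S.Smooth F) (hG : S.Smooth G) : S.Smooth fun p => F p * G p :=
  ContDiffOn.mul hF hG

@[fun_prop]
theorem Smooth.pow (hF : S.Smooth F) (n : ℕ) : S.Smooth fun p => F p ^ n :=
  ContDiffOn.pow hF n

@[fun_prop]
theorem smooth_const (k : ℝ) : S.Smooth fun _ => k := contDiffOn_const

@[fun_prop]
theorem smooth_radius : S.Smooth fun p => p.1 := contDiffOn_fst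

@[fun_prop]
theorem smooth_sin : S.Smooth fun p => Real.sin p.2.1 :=
  (Real.contDiff_sin.comp (contDiff_fst.comp contDiff_snd)).contDiffOn

theorem Smooth.one_div (hF : S.Smooth F) (h : ∀ p ∈ S.box, F p ≠ 0) :
    S.Smooth fun p => 1 / F p :=
  ContDiffOn.div contDiffOn_const hF h

@[fun_prop]
theorem smooth_one_div_sin : S.Smooth fun p => 1 / Real.sin p.2.1 :=
  smooth_sin.one_div fun _ hp => (S.sin_pos hp).ne'

@[fun_prop]
theorem smooth_one_div_radius_sq : S.Smooth fun p => 1 / p.1 ^ 2 :=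
  (smooth_radius.pow 2).one_div fun _ hp => (pow_pos (S.radius_pos hp) 2).ne'

@[fun_prop]
theorem smooth_one_div_radius_sq_mul_sin_sq :
    S.Smooth fun p => 1 / (p.1 ^ 2 * Real.sin p.2.1 ^ 2) :=
  ((smooth_radius.pow 2).mul (smooth_sin.pow 2)).one_div fun _ hp =>
    (mul_pos (pow_pos (S.radius_pos hp) 2) (pow_pos (S.sin_pos hp) 2)).ne'

@[fun_prop]
theorem Smooth.D (e : ℝ × ℝ × ℝ) (hF : S.Smooth F) : S.Smooth (S.D e F) :=
  (ContDiffOn.fderivWithin hF S.uniqueDiffOn_box (by simp)).clm_apply contDiffOn_const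

theorem D_congr (h : EqOn F G S.box) : EqOn (S.D e F) (S.D e G) S.box := fun p hp => by
  simp only [Shell.D, fderivWithin_congr h (h hp)]

theorem D_mul (hF : S.Smooth F) (hG : S.Smooth G) (hp : p ∈ S.box) :
    S.D e (fun q => F q * G q) p = F p * S.D e G p + S.D e F p * G p := by
  have := fderivWithin_fun_mul (S.uniqueDiffOn_box p hp) (hF.differentiableWithinAt hp)
    (hG.differentiableWithinAt hp)
  simp [Shell.D, this]
  ring

theorem D_sub (hF : S.Smooth F) (hG : S.Smooth G) (hp : p ∈ S.box) :
    S.D e (fun q => F q - G q) p = S.D e F p - S.D e G p := by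
  have := fderivWithin_fun_sub (S.uniqueDiffOn_box p hp) (hF.differentiableWithinAt hp)
    (hG.differentiableWithinAt hp)
  simp [Shell.D, this]

theorem D_const_mul (k : ℝ) (hF : S.Smooth F) (hp : p ∈ S.box) :
    S.D e (fun q => k * F q) p = k * S.D e F p := by
  have := fderivWithin_const_mul (S.uniqueDiffOn_box p hp) (hF.differentiableWithinAt hp) k
  simp [Shell.D, this]

theorem D_mul_of_D_eq_zero (hc : S.Smooth c) (hF : S.Smooth F) (h : ∀ p ∈ S.box, S.D e c p = 0)
    (hp : p ∈ S.box) : S.D e (fun q => c q * F q) p = c p * S.D e F p := by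
  rw [D_mul hc hF hp, h p hp]
  ring

theorem D_comm (hF : S.Smooth F) (hp : p ∈ S.box) : S.D e (S.D d F) p = S.D d (S.D e F) p := by
  have hsymm : IsSymmSndFDerivWithinAt ℝ F S.box p :=
    (hF p hp).isSymmSndFDerivWithinAt (by simp; exact WithTop.coe_le_coe.2 le_top)
      S.uniqueDiffOn_box (by rw [S.interior_box]; exact S.box_subset_closure_core hp) hp
  have hdiff : DifferentiableWithinAt ℝ (fderivWithin ℝ F S.box) S.box p :=
    (ContDiffOn.fderivWithin (m := 1) hF S.uniqueDiffOn_box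
      (by norm_num; exact WithTop.coe_le_coe.2 le_top)).differentiableOn (by simp) p hp
  have key : ∀ v w : ℝ × ℝ × ℝ, S.D v (S.D w F) p
      = fderivWithin ℝ (fderivWithin ℝ F S.box) S.box p v w := fun v w => by
    have := fderivWithin_clm_apply (S.uniqueDiffOn_box p hp) hdiff
      (differentiableWithinAt_const w)
    change fderivWithin ℝ (fun y => fderivWithin ℝ F S.box y w) S.box p v = _
    rw [this]
    simp
  rw [key, key, hsymm]

theorem hasDerivWithinAt_r (hF : S.Smooth F) {r θ φ : ℝ} (hp : (r, θ, φ) ∈ S.box) :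
    HasDerivWithinAt (fun s => F (s, θ, φ)) (S.D er F (r, θ, φ)) (Icc S.R1 S.R2) r :=
  HasFDerivWithinAt.comp_hasDerivWithinAt r (f := fun s => (s, θ, φ))
    (hF.differentiableWithinAt hp).hasFDerivWithinAt
    ((hasDerivWithinAt_id r _).prodMk (hasDerivWithinAt_const _ _ _))
    (fun _ hs => ⟨hs, hp.2⟩)

theorem hasDerivWithinAt_θ (hF : S.Smooth F) {r θ φ : ℝ} (hp : (r, θ, φ) ∈ S.box) :
    HasDerivWithinAt (fun s => F (r, s, φ)) (S.D eθ F (r, θ, φ)) (Icc S.θ1 S.θ2) θ :=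
  HasFDerivWithinAt.comp_hasDerivWithinAt θ (f := fun s => (r, s, φ))
    (hF.differentiableWithinAt hp).hasFDerivWithinAt
    ((hasDerivWithinAt_const _ _ _).prodMk
      ((hasDerivWithinAt_id θ _).prodMk (hasDerivWithinAt_const _ _ _)))
    (fun _ hs => ⟨hp.1, hs, hp.2.2⟩)

theorem hasDerivWithinAt_φ (hF : S.Smooth F) {r θ φ : ℝ} (hp : (r, θ, φ) ∈ S.box) :
    HasDerivWithinAt (fun s => F (r, θ, s)) (S.D eφ F (r, θ, φ)) (Icc S.φ1 S.φ2) φ :=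
  HasFDerivWithinAt.comp_hasDerivWithinAt φ (f := fun s => (r, θ, s))
    (hF.differentiableWithinAt hp).hasFDerivWithinAt
    ((hasDerivWithinAt_const _ _ _).prodMk
      ((hasDerivWithinAt_const _ _ _).prodMk (hasDerivWithinAt_id φ _)))
    (fun _ hs => ⟨hp.1, hp.2.1, hs⟩)

theorem D_er_eq_zero (hc : S.Smooth c) (h : ∀ r r' y, c (r, y) = c (r', y)) :
    ∀ p ∈ S.box, S.D er c p = 0 := by
  rintro ⟨r, θ, φ⟩ hp
  refine (uniqueDiffOn_Icc S.R_lt r hp.1).eq_deriv _ (hasDerivWithinAt_r hc hp) ?_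
  simpa only [fun s => h s 0 (θ, φ)] using hasDerivWithinAt_const r _ (c (0, θ, φ))

theorem D_eθ_eq_zero (hc : S.Smooth c) (h : ∀ r θ θ' φ, c (r, θ, φ) = c (r, θ', φ)) :
    ∀ p ∈ S.box, S.D eθ c p = 0 := by
  rintro ⟨r, θ, φ⟩ hp
  refine (uniqueDiffOn_Icc S.θ_lt θ hp.2.1).eq_deriv _ (hasDerivWithinAt_θ hc hp) ?_
  simpa only [fun s => h r s 0 φ] using hasDerivWithinAt_const θ _ (c (r, 0, φ))

theorem D_eφ_eq_zero (hc : S.Smooth c) (h : ∀ r θ φ φ', c (r, θ, φ) = c (r, θ, φ')) :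
    ∀ p ∈ S.box, S.D eφ c p = 0 := by
  rintro ⟨r, θ, φ⟩ hp
  refine (uniqueDiffOn_Icc S.φ_lt φ hp.2.2).eq_deriv _ (hasDerivWithinAt_φ hc hp) ?_
  simpa only [fun s => h r θ s 0] using hasDerivWithinAt_const φ _ (c (r, θ, 0))

/-! ### Vanishing on faces -/

variable (S)

/-- `F` vanishes on the two faces `r = R1` and `r = R2`. -/
def VanishR (F : ℝ × ℝ × ℝ → ℝ) : Prop := ∀ p ∈ S.box, p.1 = S.R1 ∨ p.1 = S.R2 → F p = 0

/-- `F` vanishes on the two faces `θ = θ1` and `θ = θ2`. -/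
def Vanishθ (F : ℝ × ℝ × ℝ → ℝ) : Prop := ∀ p ∈ S.box, p.2.1 = S.θ1 ∨ p.2.1 = S.θ2 → F p = 0

/-- `F` vanishes on the two faces `φ = φ1` and `φ = φ2`. -/
def Vanishφ (F : ℝ × ℝ × ℝ → ℝ) : Prop := ∀ p ∈ S.box, p.2.2 = S.φ1 ∨ p.2.2 = S.φ2 → F p = 0

variable {S}

theorem Vanishθ.D_er (h : S.Vanishθ F) (hF : S.Smooth F) : S.Vanishθ (S.D er F) := by
  rintro ⟨r, θ, φ⟩ hp hθ
  refine (uniqueDiffOn_Icc S.R_lt r hp.1).eq_deriv _ (hasDerivWithinAt_r hF hp) ?_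
  exact (hasDerivWithinAt_const r _ 0).congr (fun s hs => h _ ⟨hs, hp.2⟩ hθ) (h _ hp hθ)

theorem Vanishφ.D_er (h : S.Vanishφ F) (hF : S.Smooth F) : S.Vanishφ (S.D er F) := by
  rintro ⟨r, θ, φ⟩ hp hφ
  refine (uniqueDiffOn_Icc S.R_lt r hp.1).eq_deriv _ (hasDerivWithinAt_r hF hp) ?_
  exact (hasDerivWithinAt_const r _ 0).congr (fun s hs => h _ ⟨hs, hp.2⟩ hφ) (h _ hp hφ)

theorem Vanishφ.D_eθ (h : S.Vanishφ F) (hF : S.Smooth F) : S.Vanishφ (S.D eθ F) := by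
  rintro ⟨r, θ, φ⟩ hp hφ
  refine (uniqueDiffOn_Icc S.θ_lt θ hp.2.1).eq_deriv _ (hasDerivWithinAt_θ hF hp) ?_
  exact (hasDerivWithinAt_const θ _ 0).congr (fun s hs => h _ ⟨hp.1, hs, hp.2.2⟩ hφ) (h _ hp hφ)

/-! ### Integration over the box -/

theorem Smooth.integrableOn (hF : S.Smooth F) : IntegrableOn F S.core :=
  (hF.continuousOn.integrableOn_compact S.isCompact_box).mono_set S.core_subset_box

theorem J_congr (h : EqOn F G S.box) : S.J F = S.J G :=
  setIntegral_congr_fun S.isOpen_core.measurableSet (h.mono S.core_subset_box)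

theorem J_mono (hF : S.Smooth F) (hG : S.Smooth G) (h : ∀ p ∈ S.box, F p ≤ G p) :
    S.J F ≤ S.J G :=
  setIntegral_mono_on hF.integrableOn hG.integrableOn S.isOpen_core.measurableSet
    fun p hp => h p (S.core_subset_box hp)

theorem J_add (hF : S.Smooth F) (hG : S.Smooth G) : S.J (fun p => F p + G p) = S.J F + S.J G :=
  integral_add hF.integrableOn hG.integrableOn

theorem J_sub (hF : S.Smooth F) (hG : S.Smooth G) : S.J (fun p => F p - G p) = S.J F - S.J G :=
  integral_sub hF.integrableOn hG.integrableOn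

theorem J_const_mul (k : ℝ) (F : ℝ × ℝ × ℝ → ℝ) : S.J (fun p => k * F p) = k * S.J F :=
  integral_const_mul k F

theorem setIntegral_Ioo_eq_sub {a b : ℝ} (hab : a ≤ b) {g g' : ℝ → ℝ}
    (hg : ∀ x ∈ Icc a b, HasDerivWithinAt g (g' x) (Icc a b) x) (hg' : ContinuousOn g' (Icc a b)) :
    ∫ x in Ioo a b, g' x = g b - g a := by
  rw [← integral_Ioc_eq_integral_Ioo, ← intervalIntegral.integral_of_le hab]
  exact intervalIntegral.integral_eq_sub_of_hasDerivAt_of_le hab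
    (fun x hx => (hg x hx).continuousWithinAt)
    (fun x hx => (hg x (Ioo_subset_Icc_self hx)).hasDerivAt (Icc_mem_nhds hx.1 hx.2))
    (hg'.intervalIntegrable_of_Icc hab)

theorem J_eq_iterated (hF : S.Smooth F) :
    S.J F = ∫ r in Ioo S.R1 S.R2, ∫ θ in Ioo S.θ1 S.θ2, ∫ φ in Ioo S.φ1 S.φ2, F (r, θ, φ) := by
  have h : S.J F = ∫ r in Ioo S.R1 S.R2, ∫ y in Ioo S.θ1 S.θ2 ×ˢ Ioo S.φ1 S.φ2, F (r, y) :=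
    setIntegral_prod F hF.integrableOn
  rw [h]
  refine setIntegral_congr_fun measurableSet_Ioo fun r hr => ?_
  refine setIntegral_prod (fun y => F (r, y)) ?_
  refine IntegrableOn.mono_set (t := Icc S.θ1 S.θ2 ×ˢ Icc S.φ1 S.φ2) ?_
    (prod_mono Ioo_subset_Icc_self Ioo_subset_Icc_self)
  refine ContinuousOn.integrableOn_compact (isCompact_Icc.prod isCompact_Icc) ?_
  exact hF.continuousOn.comp (by fun_prop) fun y hy => ⟨Ioo_subset_Icc_self hr, hy⟩

theorem J_D_er (hF : S.Smooth F) (h : S.VanishR F) : S.J (S.D er F) = 0 := by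
  have hD : Integrable (S.D er F) ((volume.restrict (Ioo S.R1 S.R2)).prod
      (volume.restrict (Ioo S.θ1 S.θ2 ×ˢ Ioo S.φ1 S.φ2))) := by
    rw [Measure.prod_restrict]
    exact (hF.D er).integrableOn
  have hJ : S.J (S.D er F) = ∫ p, S.D er F p ∂((volume.restrict (Ioo S.R1 S.R2)).prod
      (volume.restrict (Ioo S.θ1 S.θ2 ×ˢ Ioo S.φ1 S.φ2))) := by
    rw [Measure.prod_restrict]
    rfl
  rw [hJ, integral_prod_symm _ hD]
  refine setIntegral_eq_zero_of_forall_eq_zero fun y hy => ?_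
  have hy' : ∀ r ∈ Icc S.R1 S.R2, (r, y) ∈ S.box := fun r hr =>
    ⟨hr, Ioo_subset_Icc_self hy.1, Ioo_subset_Icc_self hy.2⟩
  rw [setIntegral_Ioo_eq_sub S.R_lt.le (fun r hr => hasDerivWithinAt_r hF (hy' r hr))
    ((hF.D er).continuousOn.comp (by fun_prop) hy')]
  have h1 := h _ (hy' _ (left_mem_Icc.2 S.R_lt.le)) (Or.inl rfl)
  have h2 := h _ (hy' _ (right_mem_Icc.2 S.R_lt.le)) (Or.inr rfl)
  exact sub_eq_zero.2 (h2.trans h1.symm)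

theorem J_D_eθ (hF : S.Smooth F) (h : S.Vanishθ F) : S.J (S.D eθ F) = 0 := by
  rw [J_eq_iterated (hF.D eθ)]
  refine setIntegral_eq_zero_of_forall_eq_zero fun r hr => ?_
  have hr' := Ioo_subset_Icc_self hr
  have hcont : ContinuousOn (fun y : ℝ × ℝ => S.D eθ F (r, y))
      (Icc S.θ1 S.θ2 ×ˢ Icc S.φ1 S.φ2) :=
    (hF.D eθ).continuousOn.comp (by fun_prop) fun y hy => ⟨hr', hy⟩
  rw [integral_integral_swap]
  · refine setIntegral_eq_zero_of_forall_eq_zero fun φ hφ => ?_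
    have hy' : ∀ θ ∈ Icc S.θ1 S.θ2, (r, θ, φ) ∈ S.box := fun θ hθ =>
      ⟨hr', hθ, Ioo_subset_Icc_self hφ⟩
    rw [setIntegral_Ioo_eq_sub S.θ_lt.le (fun θ hθ => hasDerivWithinAt_θ hF (hy' θ hθ))
      ((hF.D eθ).continuousOn.comp (by fun_prop) hy')]
    have h1 := h _ (hy' _ (left_mem_Icc.2 S.θ_lt.le)) (Or.inl rfl)
    have h2 := h _ (hy' _ (right_mem_Icc.2 S.θ_lt.le)) (Or.inr rfl)
    exact sub_eq_zero.2 (h2.trans h1.symm)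
  · rw [Measure.prod_restrict]
    exact (hcont.integrableOn_compact (isCompact_Icc.prod isCompact_Icc)).mono_set
      (prod_mono Ioo_subset_Icc_self Ioo_subset_Icc_self)

theorem J_D_eφ (hF : S.Smooth F) (h : S.Vanishφ F) : S.J (S.D eφ F) = 0 := by
  rw [J_eq_iterated (hF.D eφ)]
  refine setIntegral_eq_zero_of_forall_eq_zero fun r hr => ?_
  refine setIntegral_eq_zero_of_forall_eq_zero fun θ hθ => ?_
  have hy' : ∀ φ ∈ Icc S.φ1 S.φ2, (r, θ, φ) ∈ S.box := fun φ hφ =>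
    ⟨Ioo_subset_Icc_self hr, Ioo_subset_Icc_self hθ, hφ⟩
  rw [setIntegral_Ioo_eq_sub S.φ_lt.le (fun φ hφ => hasDerivWithinAt_φ hF (hy' φ hφ))
    ((hF.D eφ).continuousOn.comp (by fun_prop) hy')]
  have h1 := h _ (hy' _ (left_mem_Icc.2 S.φ_lt.le)) (Or.inl rfl)
  have h2 := h _ (hy' _ (right_mem_Icc.2 S.φ_lt.le)) (Or.inr rfl)
  exact sub_eq_zero.2 (h2.trans h1.symm)

theorem J_mul_D_mul (hc : S.Smooth c) (hK : S.Smooth K) (hG : S.Smooth G)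
    (hce : ∀ p ∈ S.box, S.D e c p = 0) (h : S.J (S.D e fun p => c p * K p * G p) = 0) :
    S.J (fun p => c p * S.D e K p * G p) = -S.J (fun p => c p * K p * S.D e G p) := by
  have hDK := hK.D e
  have hDG := hG.D e
  rw [eq_neg_iff_add_eq_zero, ← J_add (by fun_prop) (by fun_prop), ← h]
  refine J_congr fun p hp => ?_
  have hcK : S.Smooth fun q => c q * K q := by fun_prop
  simp only [D_mul hcK hG hp, D_mul hc hK hp, hce p hp]
  ring

/-! ### One-directional operators and Green's identities -/

variable (S)

/-- The weight `r² sin θ`. -/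
def ω (p : ℝ × ℝ × ℝ) : ℝ := p.1 ^ 2 * Real.sin p.2.1

/-- The weighted inner product of functions on the box. -/
def ip (F G : ℝ × ℝ × ℝ → ℝ) : ℝ := S.J fun p => F p * G p * ω p

/-- The radial operator `r⁻² ∂_r (r² ∂_r F)`. -/
def Lr (F : ℝ × ℝ × ℝ → ℝ) (p : ℝ × ℝ × ℝ) : ℝ :=
  1 / p.1 ^ 2 * S.D er (fun q => q.1 ^ 2 * S.D er F q) p

/-- The polar operator `(sin θ)⁻¹ ∂_θ (sin θ ∂_θ F)`. -/
def Lθ (F : ℝ × ℝ × ℝ → ℝ) (p : ℝ × ℝ × ℝ) : ℝ :=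
  1 / Real.sin p.2.1 * S.D eθ (fun q => Real.sin q.2.1 * S.D eθ F q) p

/-- The azimuthal operator `∂²_φ F`. -/
def Lφ (F : ℝ × ℝ × ℝ → ℝ) (p : ℝ × ℝ × ℝ) : ℝ := S.D eφ (S.D eφ F) p

variable {S}

@[fun_prop]
theorem smooth_ω : S.Smooth fun p => ω p := by
  unfold ω
  fun_prop

theorem ω_pos (hp : p ∈ S.box) : 0 < ω p :=
  mul_pos (pow_pos (S.radius_pos hp) 2) (S.sin_pos hp)

@[fun_prop]
theorem Smooth.Lr (hF : S.Smooth F) : S.Smooth fun p => S.Lr F p := by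
  unfold Shell.Lr
  fun_prop

@[fun_prop]
theorem Smooth.Lθ (hF : S.Smooth F) : S.Smooth fun p => S.Lθ F p := by
  unfold Shell.Lθ
  fun_prop

@[fun_prop]
theorem Smooth.Lφ (hF : S.Smooth F) : S.Smooth fun p => S.Lφ F p := by
  unfold Shell.Lφ
  fun_prop

theorem green_r (hF : S.Smooth F) (hG : S.Smooth G) (h : S.VanishR G) :
    S.ip (S.Lr F) G = -S.ip (S.D er F) (S.D er G) := by
  have key := J_mul_D_mul (e := er) (smooth_sin (S := S))
    (K := fun q => q.1 ^ 2 * S.D er F q) (by fun_prop) hG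
    (D_er_eq_zero smooth_sin fun _ _ _ => rfl)
    (J_D_er (by fun_prop) fun p hp hf => by simp [h p hp hf])
  refine (J_congr fun p hp => ?_).trans (key.trans (congrArg Neg.neg (J_congr fun p hp => ?_)))
  · have := (S.radius_pos hp).ne'
    simp only [Lr, ω]
    field_simp
  · simp only [ω]
    ring

theorem green_θ (hc : S.Smooth c) (hcθ : ∀ r θ θ' φ, c (r, θ, φ) = c (r, θ', φ))
    (hF : S.Smooth F) (hG : S.Smooth G) (h : S.Vanishθ G) :
    S.ip (fun p => c p * S.Lθ F p) G = -S.ip (fun p => c p * S.D eθ F p) (S.D eθ G) := by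
  have hc' : S.Smooth fun q => c q * q.1 ^ 2 := by fun_prop
  have key := J_mul_D_mul (e := eθ) hc'
    (K := fun q => Real.sin q.2.1 * S.D eθ F q) (by fun_prop) hG
    (D_eθ_eq_zero hc' fun r θ θ' φ => by simp [hcθ r θ θ' φ])
    (J_D_eθ (by fun_prop) fun p hp hf => by simp [h p hp hf])
  refine (J_congr fun p hp => ?_).trans (key.trans (congrArg Neg.neg (J_congr fun p hp => ?_)))
  · have := (S.sin_pos hp).ne'
    simp only [Lθ, ω]
    field_simp
  · simp only [ω]
    ring

theorem green_φ (hc : S.Smooth c) (hcφ : ∀ r θ φ φ', c (r, θ, φ) = c (r, θ, φ'))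
    (hF : S.Smooth F) (hG : S.Smooth G) (h : S.Vanishφ G) :
    S.ip (fun p => c p * S.Lφ F p) G = -S.ip (fun p => c p * S.D eφ F p) (S.D eφ G) := by
  have hc' : S.Smooth fun q => c q * ω q := by fun_prop
  have key := J_mul_D_mul (e := eφ) hc' (K := S.D eφ F) (by fun_prop) hG
    (D_eφ_eq_zero hc' fun r θ φ φ' => by simp [hcφ r θ φ φ', ω])
    (J_D_eφ (by fun_prop) fun p hp hf => by simp [h p hp hf])
  refine (J_congr fun p hp => ?_).trans (key.trans (congrArg Neg.neg (J_congr fun p hp => ?_)))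
  · simp only [Lφ]
    ring
  · ring

theorem ip_congr_left (h : EqOn F G S.box) : S.ip F K = S.ip G K :=
  J_congr fun p hp => by simp only [h hp]

theorem ip_sub_left (hF : S.Smooth F) (hG : S.Smooth G) (hK : S.Smooth K) :
    S.ip (fun p => F p - G p) K = S.ip F K - S.ip G K := by
  unfold ip
  rw [← J_sub (by fun_prop) (by fun_prop)]
  exact J_congr fun p _ => by ring

theorem ip_add_left (hF : S.Smooth F) (hG : S.Smooth G) (hK : S.Smooth K) :
    S.ip (fun p => F p + G p) K = S.ip F K + S.ip G K := by
  unfold ip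
  rw [← J_add (by fun_prop) (by fun_prop)]
  exact J_congr fun p _ => by ring

theorem ip_const_mul_left (k : ℝ) (F K : ℝ × ℝ × ℝ → ℝ) :
    S.ip (fun p => k * F p) K = k * S.ip F K := by
  unfold ip
  rw [← J_const_mul]
  exact J_congr fun p _ => by ring

theorem ip_self_nonneg (F : ℝ × ℝ × ℝ → ℝ) : 0 ≤ S.ip F F :=
  setIntegral_nonneg S.isOpen_core.measurableSet fun _ hp =>
    mul_nonneg (mul_self_nonneg _) (ω_pos (S.core_subset_box hp)).le

/-! ### The factors of the splitting scheme -/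

variable (S)

/-- The radial factor `I - k L_r`. -/
def Pr (k : ℝ) (F : ℝ × ℝ × ℝ → ℝ) (p : ℝ × ℝ × ℝ) : ℝ := F p - k * S.Lr F p

/-- The polar factor `I - k L_θ`. -/
def Pθ (k : ℝ) (F : ℝ × ℝ × ℝ → ℝ) (p : ℝ × ℝ × ℝ) : ℝ := F p - k * S.Lθ F p

/-- The azimuthal factor `I - k L_φ`. -/
def Pφ (k : ℝ) (F : ℝ × ℝ × ℝ → ℝ) (p : ℝ × ℝ × ℝ) : ℝ := F p - k * S.Lφ F p

variable {S} {v : ℝ × ℝ × ℝ → ℝ}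

@[fun_prop]
theorem Smooth.Pr (k : ℝ) (hF : S.Smooth F) : S.Smooth fun p => S.Pr k F p := by
  unfold Shell.Pr
  fun_prop

@[fun_prop]
theorem Smooth.Pθ (k : ℝ) (hF : S.Smooth F) : S.Smooth fun p => S.Pθ k F p := by
  unfold Shell.Pθ
  fun_prop

@[fun_prop]
theorem Smooth.Pφ (k : ℝ) (hF : S.Smooth F) : S.Smooth fun p => S.Pφ k F p := by
  unfold Shell.Pφ
  fun_prop

theorem ip_Pr (k : ℝ) (hF : S.Smooth F) (hG : S.Smooth G) (h : S.VanishR G) :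
    S.ip (S.Pr k F) G = S.ip F G + k * S.ip (S.D er F) (S.D er G) := by
  unfold Pr
  rw [ip_sub_left hF (by fun_prop) hG, ip_const_mul_left, green_r hF hG h]
  ring

theorem ip_Pθ (k : ℝ) (hF : S.Smooth F) (hG : S.Smooth G) (h : S.Vanishθ G) :
    S.ip (S.Pθ k F) G = S.ip F G + k * S.ip (S.D eθ F) (S.D eθ G) := by
  unfold Pθ
  rw [ip_sub_left hF (by fun_prop) hG, green_θ (smooth_const k) (fun _ _ _ _ => rfl) hF hG h,
    ip_const_mul_left]
  ring

theorem ip_Pφ (k : ℝ) (hF : S.Smooth F) (hG : S.Smooth G) (h : S.Vanishφ G) :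
    S.ip (S.Pφ k F) G = S.ip F G + k * S.ip (S.D eφ F) (S.D eφ G) := by
  unfold Pφ
  rw [ip_sub_left hF (by fun_prop) hG, green_φ (smooth_const k) (fun _ _ _ _ => rfl) hF hG h,
    ip_const_mul_left]
  ring

theorem D_Pφ (k : ℝ) (hF : S.Smooth F) : EqOn (S.D e (S.Pφ k F)) (S.Pφ k (S.D e F)) S.box := by
  intro p hp
  unfold Pφ Lφ
  rw [D_sub hF (by fun_prop) hp, D_const_mul k (by fun_prop) hp, D_comm (by fun_prop) hp,
    D_congr (fun q hq => D_comm hF hq) hp]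

theorem D_er_Lθ (hF : S.Smooth F) : EqOn (S.D er (S.Lθ F)) (S.Lθ (S.D er F)) S.box := by
  intro p hp
  unfold Lθ
  rw [D_mul_of_D_eq_zero smooth_one_div_sin (by fun_prop)
    (D_er_eq_zero smooth_one_div_sin fun _ _ _ => rfl) hp, D_comm (by fun_prop) hp]
  congr 1
  refine D_congr (fun q hq => ?_) hp
  rw [D_mul_of_D_eq_zero smooth_sin (by fun_prop)
    (D_er_eq_zero smooth_sin fun _ _ _ => rfl) hq, D_comm hF hq]

theorem D_er_Pθ (k : ℝ) (hF : S.Smooth F) :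
    EqOn (S.D er (S.Pθ k F)) (S.Pθ k (S.D er F)) S.box := by
  intro p hp
  unfold Pθ
  rw [D_sub hF (by fun_prop) hp, D_const_mul k (by fun_prop) hp]
  simp only [← D_er_Lθ hF hp]

/-- The mixed terms of the factorized operator are nonnegative on functions that vanish on the
boundary. -/
theorem le_ip_Pr_Pθ_Pφ {kr kθ kφ : ℝ} (hr : 0 ≤ kr) (hθ : 0 ≤ kθ) (hφ : 0 ≤ kφ)
    (hv : S.Smooth v) (hvr : S.VanishR v) (hvθ : S.Vanishθ v) (hvφ : S.Vanishφ v) :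
    S.ip v v + kr * S.ip (S.D er v) (S.D er v) + kθ * S.ip (S.D eθ v) (S.D eθ v)
        + kφ * S.ip (S.D eφ v) (S.D eφ v)
      ≤ S.ip (S.Pr kr (S.Pθ kθ (S.Pφ kφ v))) v := by
  have hDr := hv.D er
  have hP := hv.Pφ kφ
  have hDP := hP.D er
  have step (e : ℝ × ℝ × ℝ) {w : ℝ × ℝ × ℝ → ℝ} (hw : S.Smooth w)
      (hwφ : S.Vanishφ (S.D e w)) : S.ip (S.D e w) (S.D e w) ≤
        S.ip (S.D e (S.Pφ kφ w)) (S.D e w) := by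
    rw [ip_congr_left (D_Pφ kφ hw), ip_Pφ kφ (hw.D e) (hw.D e) hwφ]
    exact le_add_of_nonneg_right (mul_nonneg hφ (ip_self_nonneg _))
  have h1 := step er hv (hvφ.D_er hv)
  have h2 := step eθ hv (hvφ.D_eθ hv)
  have h3 := (ip_self_nonneg _).trans (step eθ hDr ((hvφ.D_er hv).D_eθ hDr))
  rw [ip_Pr kr (hP.Pθ kθ) hv hvr, ip_Pθ kθ hP hv hvθ, ip_Pφ kφ hv hv hvφ,
    ip_congr_left (D_er_Pθ kθ hP), ip_Pθ kθ hDP hDr (hvθ.D_er hv),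
    ip_congr_left (D_congr (D_Pφ kφ hv))]
  have h1' := mul_le_mul_of_nonneg_left h1 hr
  have h2' := mul_le_mul_of_nonneg_left h2 hθ
  have h3' := mul_nonneg hr (mul_nonneg hθ h3)
  linarith

/-! ### Relating curried functions to functions on the box -/

variable (S)

/-- `F` is a smooth function on the box that agrees with `u` in the open box. -/
structure Rep (u : ℝ → ℝ → ℝ → ℝ) (F : ℝ × ℝ × ℝ → ℝ) : Prop where
  smooth : S.Smooth F
  eq : ∀ p ∈ S.core, u p.1 p.2.1 p.2.2 = F p

variable {S} {u u' : ℝ → ℝ → ℝ → ℝ}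

theorem Rep.pr (h : S.Rep u F) : S.Rep (pr u) (S.D er F) := by
  refine ⟨h.smooth.D er, fun ⟨r, θ, φ⟩ hp => ?_⟩
  have hd := (hasDerivWithinAt_r h.smooth (S.core_subset_box hp)).hasDerivAt
    (Icc_mem_nhds hp.1.1 hp.1.2)
  refine (hd.congr_of_eventuallyEq ?_).deriv
  filter_upwards [isOpen_Ioo.mem_nhds hp.1] with s hs using h.eq (s, θ, φ) ⟨hs, hp.2⟩

theorem Rep.pt (h : S.Rep u F) : S.Rep (pt u) (S.D eθ F) := by
  refine ⟨h.smooth.D eθ, fun ⟨r, θ, φ⟩ hp => ?_⟩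
  have hd := (hasDerivWithinAt_θ h.smooth (S.core_subset_box hp)).hasDerivAt
    (Icc_mem_nhds hp.2.1.1 hp.2.1.2)
  refine (hd.congr_of_eventuallyEq ?_).deriv
  filter_upwards [isOpen_Ioo.mem_nhds hp.2.1] with s hs using
    h.eq (r, s, φ) ⟨hp.1, hs, hp.2.2⟩

theorem Rep.pp (h : S.Rep u F) : S.Rep (pp u) (S.D eφ F) := by
  refine ⟨h.smooth.D eφ, fun ⟨r, θ, φ⟩ hp => ?_⟩
  have hd := (hasDerivWithinAt_φ h.smooth (S.core_subset_box hp)).hasDerivAt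
    (Icc_mem_nhds hp.2.2.1 hp.2.2.2)
  refine (hd.congr_of_eventuallyEq ?_).deriv
  filter_upwards [isOpen_Ioo.mem_nhds hp.2.2] with s hs using
    h.eq (r, θ, s) ⟨hp.1, hp.2.1, hs⟩

theorem Rep.sub (h : S.Rep u F) (h' : S.Rep u' G) :
    S.Rep (fun r θ φ => u r θ φ - u' r θ φ) (fun p => F p - G p) :=
  ⟨h.smooth.sub h'.smooth, fun p hp => by simp only [h.eq p hp, h'.eq p hp]⟩

theorem Rep.add (h : S.Rep u F) (h' : S.Rep u' G) :
    S.Rep (fun r θ φ => u r θ φ + u' r θ φ) (fun p => F p + G p) :=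
  ⟨h.smooth.add h'.smooth, fun p hp => by simp only [h.eq p hp, h'.eq p hp]⟩

theorem Rep.weight_mul {w : ℝ → ℝ → ℝ} (hw : S.Smooth fun p => w p.1 p.2.1) (h : S.Rep u F) :
    S.Rep (fun r θ φ => w r θ * u r θ φ) (fun p => w p.1 p.2.1 * F p) :=
  ⟨hw.mul h.smooth, fun p hp => by simp only [h.eq p hp]⟩

theorem Rep.const_mul (k : ℝ) (h : S.Rep u F) :
    S.Rep (fun r θ φ => k * u r θ φ) (fun p => k * F p) :=
  h.weight_mul (w := fun _ _ => k) (smooth_const k)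

theorem Rep.congr (h : S.Rep u F) (hG : EqOn F G S.box) : S.Rep u G :=
  ⟨ContDiffOn.congr h.smooth fun _ hp => (hG hp).symm,
    fun p hp => (h.eq p hp).trans (hG (S.core_subset_box hp))⟩

theorem Rep.Drr (h : S.Rep u F) : S.Rep (Drr u) (S.Lr F) :=
  (h.pr.weight_mul (w := fun r _ => r ^ 2) (by fun_prop)).pr.weight_mul
    (w := fun r _ => 1 / r ^ 2) (by fun_prop)

theorem Rep.inv_sin_mul_pt (h : S.Rep u F) :
    S.Rep (fun r θ φ => 1 / Real.sin θ *
      _root_.pt (fun r' θ' φ' => Real.sin θ' * _root_.pt u r' θ' φ') r θ φ) (S.Lθ F) :=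
  (h.pt.weight_mul (w := fun _ θ => Real.sin θ) (by fun_prop)).pt.weight_mul
    (w := fun _ θ => 1 / Real.sin θ) (by fun_prop)

theorem Rep.Dtt (h : S.Rep u F) : S.Rep (Dtt u) (fun p => 1 / p.1 ^ 2 * S.Lθ F p) := by
  convert h.inv_sin_mul_pt.weight_mul (w := fun r _ => 1 / r ^ 2) (by fun_prop) using 1
  funext r θ φ
  simp only [_root_.Dtt, ← mul_assoc, one_div_mul_one_div]

theorem Rep.Dhtt (R : ℝ) (h : S.Rep u F) :
    S.Rep (Dhtt R u) (fun p => 1 / R ^ 2 * S.Lθ F p) := by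
  convert h.inv_sin_mul_pt.const_mul (1 / R ^ 2) using 1
  funext r θ φ
  simp only [_root_.Dhtt, ← mul_assoc, one_div_mul_one_div]

theorem Rep.Dpp (h : S.Rep u F) :
    S.Rep (Dpp u) (fun p => 1 / (p.1 ^ 2 * Real.sin p.2.1 ^ 2) * S.Lφ F p) :=
  h.pp.pp.weight_mul (w := fun r θ => 1 / (r ^ 2 * Real.sin θ ^ 2)) (by fun_prop)

theorem Rep.Dhpp (R θ : ℝ) (h : S.Rep u F) :
    S.Rep (Dhpp R θ u) (fun p => 1 / (R ^ 2 * Real.sin θ ^ 2) * S.Lφ F p) :=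
  h.pp.pp.const_mul (1 / (R ^ 2 * Real.sin θ ^ 2))

theorem Rep.lap (h : S.Rep u F) :
    S.Rep (lap u) (fun p => S.Lr F p + 1 / p.1 ^ 2 * S.Lθ F p
      + 1 / (p.1 ^ 2 * Real.sin p.2.1 ^ 2) * S.Lφ F p) :=
  (h.Drr.add h.Dtt).add h.Dpp

theorem Rep.laph (R θ : ℝ) (h : S.Rep u F) :
    S.Rep (laph R θ u) (fun p => S.Lr F p + 1 / R ^ 2 * S.Lθ F p
      + 1 / (R ^ 2 * Real.sin θ ^ 2) * S.Lφ F p) :=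
  (h.Drr.add (h.Dhtt R)).add (h.Dhpp R θ)

theorem Rep.iterated_integral (h : S.Rep u F) :
    ∫ r in Icc S.R1 S.R2, ∫ θ in Icc S.θ1 S.θ2, ∫ φ in Icc S.φ1 S.φ2, u r θ φ = S.J F := by
  rw [J_eq_iterated h.smooth]
  simp only [integral_Icc_eq_integral_Ioo]
  refine setIntegral_congr_fun measurableSet_Ioo fun r hr => ?_
  refine setIntegral_congr_fun measurableSet_Ioo fun θ hθ => ?_
  exact setIntegral_congr_fun measurableSet_Ioo fun φ hφ => h.eq (r, θ, φ) ⟨hr, hθ, hφ⟩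

theorem Rep.ipw (h : S.Rep u F) (h' : S.Rep u' G) :
    ipw S.R1 S.R2 S.θ1 S.θ2 S.φ1 S.φ2 u u' = S.ip F G :=
  Rep.iterated_integral ⟨(h.smooth.mul h'.smooth).mul smooth_ω,
    fun p hp => by simp only [h.eq p hp, h'.eq p hp, ω]⟩

theorem Rep.wnorm {w : ℝ → ℝ → ℝ} (hw : S.Smooth fun p => w p.1 p.2.1) (h : S.Rep u F) :
    wnorm S.R1 S.R2 S.θ1 S.θ2 S.φ1 S.φ2 w u = S.J (fun p => w p.1 p.2.1 * F p ^ 2) :=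
  Rep.iterated_integral ⟨hw.mul (h.smooth.pow 2), fun p hp => by simp only [h.eq p hp]⟩

theorem Rep.gradE (h : S.Rep u F) :
    gradE S.R1 S.R2 S.θ1 S.θ2 S.φ1 S.φ2 u
      = S.J (fun p => (S.D er F p ^ 2 + 1 / p.1 ^ 2 * S.D eθ F p ^ 2
        + 1 / (p.1 ^ 2 * Real.sin p.2.1 ^ 2) * S.D eφ F p ^ 2) * ω p) := by
  have hF := h.smooth
  exact Rep.iterated_integral ⟨by fun_prop, fun p hp => by
    simp only [h.pr.eq p hp, h.pt.eq p hp, h.pp.eq p hp, ω, mul_pow]⟩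

/-! ### Energy decay in one step -/

variable (S)

/-- The gradient energy of `F` plus the weighted increment energies of `F - G` in the two angular
directions. -/
def energy (F G : ℝ × ℝ × ℝ → ℝ) : ℝ :=
  1 / 2 * (S.J (fun p => 1 * S.D er F p ^ 2 * ω p)
      + S.J (fun p => 1 / p.1 ^ 2 * S.D eθ F p ^ 2 * ω p)
      + S.J (fun p => 1 / (p.1 ^ 2 * Real.sin p.2.1 ^ 2) * S.D eφ F p ^ 2 * ω p))
    + 1 / 4 * (S.J (fun p => (1 / S.R1 ^ 2 - 1 / p.1 ^ 2)
          * S.D eθ (fun q => F q - G q) p ^ 2 * ω p)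
      + S.J (fun p => (1 / (S.R1 ^ 2 * Real.sin S.θ1 ^ 2) - 1 / (p.1 ^ 2 * Real.sin p.2.1 ^ 2))
          * S.D eφ (fun q => F q - G q) p ^ 2 * ω p))

variable {S}

theorem Rep.energy (h : S.Rep u F) (h' : S.Rep u' G) :
    1 / 2 * _root_.gradE S.R1 S.R2 S.θ1 S.θ2 S.φ1 S.φ2 u
      + 1 / 4 * (_root_.wnorm S.R1 S.R2 S.θ1 S.θ2 S.φ1 S.φ2
            (fun r θ => (r ^ 2 / S.R1 ^ 2 - 1) * Real.sin θ)
            (_root_.pt (fun r θ φ => u r θ φ - u' r θ φ))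
          + _root_.wnorm S.R1 S.R2 S.θ1 S.θ2 S.φ1 S.φ2
            (fun r θ => r ^ 2 * Real.sin θ *
              (1 / (S.R1 ^ 2 * Real.sin S.θ1 ^ 2) - 1 / (r ^ 2 * Real.sin θ ^ 2)))
            (_root_.pp (fun r θ φ => u r θ φ - u' r θ φ)))
      = S.energy F G := by
  have hF := h.smooth
  have hG := h'.smooth
  have hw : S.Smooth fun p => (p.1 ^ 2 / S.R1 ^ 2 - 1) * Real.sin p.2.1 := by
    simp only [div_eq_mul_inv]
    fun_prop
  rw [h.gradE, (h.sub h').pt.wnorm hw, (h.sub h').pp.wnorm (by fun_prop), Shell.energy]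
  congr 2
  · rw [← J_add (by fun_prop) (by fun_prop), ← J_add (by fun_prop) (by fun_prop)]
    exact J_congr fun p _ => by ring
  · congr 1
    · refine J_congr fun p hp => ?_
      have := (S.radius_pos hp).ne'
      have := S.R1_pos.ne'
      simp only [ω]
      field_simp
    · refine J_congr fun p _ => ?_
      simp only [ω]
      ring

theorem J_linear_le {a₁ a₂ a₃ a₄ b₁ b₂ b₃ : ℝ × ℝ × ℝ → ℝ} (ha₁ : S.Smooth a₁)
    (ha₂ : S.Smooth a₂) (ha₃ : S.Smooth a₃) (ha₄ : S.Smooth a₄) (hb₁ : S.Smooth b₁)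
    (hb₂ : S.Smooth b₂) (hb₃ : S.Smooth b₃)
    (h : ∀ p ∈ S.box, 1 / 2 * a₁ p + 1 / 4 * a₂ p
      ≤ 1 / 2 * a₃ p + 1 / 4 * a₄ p + (1 / 2 * b₁ p + b₂ p - 1 / 2 * b₃ p)) :
    1 / 2 * S.J a₁ + 1 / 4 * S.J a₂
      ≤ 1 / 2 * S.J a₃ + 1 / 4 * S.J a₄ + (1 / 2 * S.J b₁ + S.J b₂ - 1 / 2 * S.J b₃) := by
  have key := J_mono (S := S) (by fun_prop) (by fun_prop) h
  rw [J_add (by fun_prop) (by fun_prop), J_add (by fun_prop) (by fun_prop),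
    J_add (by fun_prop) (by fun_prop), J_sub (by fun_prop) (by fun_prop),
    J_add (by fun_prop) (by fun_prop)] at key
  simpa only [J_const_mul] using key

variable {X Y Z : ℝ × ℝ × ℝ → ℝ}

/-- The contribution of one coordinate direction to the energy balance: the coefficient `c` of the
Laplacian in that direction is dominated by the constant coefficient `k`. -/
theorem directional_energy_le (e : ℝ × ℝ × ℝ) {k : ℝ} (hc : S.Smooth c)
    (hck : ∀ p ∈ S.box, c p ≤ k) (hX : S.Smooth X) (hY : S.Smooth Y) (hZ : S.Smooth Z) :
    1 / 2 * S.J (fun p => c p * S.D e X p ^ 2 * ω p)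
        + 1 / 4 * S.J (fun p => (k - c p) * S.D e (fun q => X q - Y q) p ^ 2 * ω p)
      ≤ 1 / 2 * S.J (fun p => c p * S.D e Y p ^ 2 * ω p)
        + 1 / 4 * S.J (fun p => (k - c p) * S.D e (fun q => Y q - Z q) p ^ 2 * ω p)
        + (1 / 2 * S.ip (fun p => k * S.D e (fun q => X q - Y q) p) (S.D e fun q => X q - Y q)
          + S.ip (fun p => c p * S.D e (fun q => 3 / 2 * Y q - 1 / 2 * Z q) p)
              (S.D e fun q => X q - Y q)
          - 1 / 2 * S.ip (fun p => k * S.D e (fun q => Y q - Z q) p)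
              (S.D e fun q => X q - Y q)) := by
  refine J_linear_le (by fun_prop) (by fun_prop) (by fun_prop) (by fun_prop) (by fun_prop)
    (by fun_prop) (by fun_prop) fun p hp => ?_
  simp only [D_sub hX hY hp, D_sub hY hZ hp,
    D_sub (show S.Smooth fun q => 3 / 2 * Y q by fun_prop)
      (show S.Smooth fun q => 1 / 2 * Z q by fun_prop) hp, D_const_mul _ hY hp, D_const_mul _ hZ hp]
  have := mul_nonneg (mul_nonneg (sub_nonneg.2 (hck p hp)) (ω_pos hp).le)
    (sq_nonneg (S.D e X p - 2 * S.D e Y p + S.D e Z p))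
  linarith

theorem ip_const_mul_right (k : ℝ) (F K : ℝ × ℝ × ℝ → ℝ) :
    S.ip F (fun p => k * K p) = k * S.ip F K := by
  unfold ip
  rw [← J_const_mul]
  exact J_congr fun p _ => by ring

theorem ip_congr_right (h : EqOn F G S.box) : S.ip K F = S.ip K G :=
  J_congr fun p hp => by simp only [h hp]

theorem VanishR.smul_sub (k : ℝ) (hF : S.VanishR F) (hG : S.VanishR G) :
    S.VanishR fun p => k * (F p - G p) := fun p hp h => by simp [hF p hp h, hG p hp h]

theorem Vanishθ.smul_sub (k : ℝ) (hF : S.Vanishθ F) (hG : S.Vanishθ G) :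
    S.Vanishθ fun p => k * (F p - G p) := fun p hp h => by simp [hF p hp h, hG p hp h]

theorem Vanishφ.smul_sub (k : ℝ) (hF : S.Vanishφ F) (hG : S.Vanishφ G) :
    S.Vanishφ fun p => k * (F p - G p) := fun p hp h => by simp [hF p hp h, hG p hp h]

/-- Green's identity for a Laplacian whose angular coefficients are `a` and `b`. -/
theorem ip_laplacian {a b : ℝ × ℝ × ℝ → ℝ} (ha : S.Smooth a)
    (haθ : ∀ r θ θ' φ, a (r, θ, φ) = a (r, θ', φ)) (hb : S.Smooth b)
    (hbφ : ∀ r θ φ φ', b (r, θ, φ) = b (r, θ, φ')) (hF : S.Smooth F) (hv : S.Smooth v)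
    (hvr : S.VanishR v) (hvθ : S.Vanishθ v) (hvφ : S.Vanishφ v) :
    S.ip (fun p => S.Lr F p + a p * S.Lθ F p + b p * S.Lφ F p) v
      = -(S.ip (fun p => 1 * S.D er F p) (S.D er v) + S.ip (fun p => a p * S.D eθ F p) (S.D eθ v)
        + S.ip (fun p => b p * S.D eφ F p) (S.D eφ v)) := by
  rw [ip_add_left (by fun_prop) (by fun_prop) hv, ip_add_left (by fun_prop) (by fun_prop) hv,
    green_r hF hv hvr, green_θ ha haθ hF hv hvθ, green_φ hb hbφ hF hv hvφ]
  simp only [one_mul]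
  ring

/-- One step of the splitting scheme decreases the energy by the weighted norm of the discrete time
derivative. -/
theorem energy_step {τ : ℝ} (hτ : 0 < τ)
    (hsin : ∀ θ ∈ Icc S.θ1 S.θ2, Real.sin S.θ1 ≤ Real.sin θ)
    (hX : S.Smooth X) (hY : S.Smooth Y) (hZ : S.Smooth Z)
    (hvr : S.VanishR fun p => 1 / τ * (X p - Y p)) (hvθ : S.Vanishθ fun p => 1 / τ * (X p - Y p))
    (hvφ : S.Vanishφ fun p => 1 / τ * (X p - Y p))
    (hscheme : ∀ p ∈ S.core,
      S.Pr (τ / 2) (S.Pθ (τ / 2 * (1 / S.R1 ^ 2))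
        (S.Pφ (τ / 2 * (1 / (S.R1 ^ 2 * Real.sin S.θ1 ^ 2))) fun p => 1 / τ * (X p - Y p))) p
      = (S.Lr (fun q => 3 / 2 * Y q - 1 / 2 * Z q) p
          + 1 / p.1 ^ 2 * S.Lθ (fun q => 3 / 2 * Y q - 1 / 2 * Z q) p
          + 1 / (p.1 ^ 2 * Real.sin p.2.1 ^ 2) * S.Lφ (fun q => 3 / 2 * Y q - 1 / 2 * Z q) p)
        - 1 / 2 * (S.Lr (fun q => Y q - Z q) p + 1 / S.R1 ^ 2 * S.Lθ (fun q => Y q - Z q) p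
          + 1 / (S.R1 ^ 2 * Real.sin S.θ1 ^ 2) * S.Lφ (fun q => Y q - Z q) p)) :
    τ * (S.ip (fun p => X p - Y p) (fun p => X p - Y p) / τ ^ 2) + S.energy X Y
      ≤ S.energy Y Z := by
  have hW : S.Smooth fun p => X p - Y p := by fun_prop
  have hv : S.Smooth fun p => 1 / τ * (X p - Y p) := by fun_prop
  have hR1 := S.R1_pos
  have hs1 : 0 < Real.sin S.θ1 :=
    Real.sin_pos_of_pos_of_lt_pi S.θ1_pos (S.θ_lt.trans S.θ2_lt_pi)
  have hθ : ∀ p ∈ S.box, 1 / p.1 ^ 2 ≤ 1 / S.R1 ^ 2 := fun p hp => by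
    have := hp.1.1
    gcongr
  have hφ : ∀ p ∈ S.box,
      1 / (p.1 ^ 2 * Real.sin p.2.1 ^ 2) ≤ 1 / (S.R1 ^ 2 * Real.sin S.θ1 ^ 2) := fun p hp => by
    have := hp.1.1
    have := hsin _ hp.2.1
    gcongr
  have lower := le_ip_Pr_Pθ_Pφ (kr := τ / 2) (kθ := τ / 2 * (1 / S.R1 ^ 2))
    (kφ := τ / 2 * (1 / (S.R1 ^ 2 * Real.sin S.θ1 ^ 2))) (by positivity) (by positivity)
    (by positivity) hv hvr hvθ hvφ
  have hscheme_ip : S.ip _ (fun p => 1 / τ * (X p - Y p)) = S.ip _ _ :=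
    setIntegral_congr_fun S.isOpen_core.measurableSet fun p hp =>
      congrArg (fun t => t * (1 / τ * (X p - Y p)) * ω p) (hscheme p hp)
  rw [hscheme_ip, ip_sub_left (by fun_prop) (by fun_prop) hv, ip_const_mul_left (1 / 2),
    ip_laplacian (by fun_prop) (fun _ _ _ _ => rfl) (by fun_prop) (fun _ _ _ _ => rfl)
      (by fun_prop) hv hvr hvθ hvφ,
    ip_laplacian (smooth_const _) (fun _ _ _ _ => rfl) (smooth_const _) (fun _ _ _ _ => rfl)
      (by fun_prop) hv hvr hvθ hvφ] at lower
  have hD (e : ℝ × ℝ × ℝ) : EqOn (S.D e fun p => 1 / τ * (X p - Y p))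
      (fun p => 1 / τ * S.D e (fun q => X q - Y q) p) S.box := fun p hp => D_const_mul _ hW hp
  have hDr (e : ℝ × ℝ × ℝ) (K : ℝ × ℝ × ℝ → ℝ) : S.ip K (S.D e fun p => 1 / τ * (X p - Y p))
      = 1 / τ * S.ip K (S.D e fun q => X q - Y q) := by
    rw [ip_congr_right (hD e), ip_const_mul_right]
  have hDl (e : ℝ × ℝ × ℝ) (K : ℝ × ℝ × ℝ → ℝ) : S.ip (S.D e fun p => 1 / τ * (X p - Y p)) K
      = 1 / τ * S.ip (S.D e fun q => X q - Y q) K := by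
    rw [ip_congr_left (hD e), ip_const_mul_left]
  simp only [hDr, hDl, ip_const_mul_right, ip_const_mul_left] at lower
  have dr := directional_energy_le er (smooth_const (S := S) 1) (fun _ _ => le_refl (1 : ℝ))
    hX hY hZ
  have dθ := directional_energy_le eθ smooth_one_div_radius_sq hθ hX hY hZ
  have dφ := directional_energy_le eφ smooth_one_div_radius_sq_mul_sin_sq hφ hX hY hZ
  simp only [ip_const_mul_left, sub_self, zero_mul] at dr dθ dφ
  have cancel (a t : ℝ) : τ / 2 * a * (1 / τ * (1 / τ * t)) = 1 / τ * (1 / 2 * (a * t)) := by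
    field_simp
  have cancel_one (t : ℝ) : τ / 2 * (1 / τ * (1 / τ * t)) = 1 / τ * (1 / 2 * t) := by
    field_simp
  have time_term (t : ℝ) : τ * (t / τ ^ 2) = 1 / τ * t := by
    field_simp
  rw [cancel, cancel, cancel_one] at lower
  unfold energy
  rw [time_term]
  refine le_of_mul_le_mul_left ?_ (one_div_pos.2 hτ)
  linear_combination lower + 1 / τ * (dr + dθ + dφ)

end Shell

theorem douglas_splitting_unconditional_stability
    (R1 R2 θ1 θ2 φ1 φ2 : ℝ)
    (hR1 : 0 < R1) (hRR : R1 < R2)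
    (hθ1 : 0 < θ1) (hθθ : θ1 < θ2) (hθ2 : θ2 < Real.pi)
    (hφ : φ1 < φ2)
    (hsin : ∀ θ ∈ Icc θ1 θ2, Real.sin θ1 ≤ Real.sin θ)
    (τ : ℝ) (hτ : 0 < τ)
    (N : ℕ) (hN : 2 ≤ N)
    (T : ℕ → ℝ → ℝ → ℝ → ℝ)
    (hTsm : ∀ n ≤ N, SmoothOnBox R1 R2 θ1 θ2 φ1 φ2 (T n))
    (hTbd : ∀ n ≤ N, VanishOnBdry R1 R2 θ1 θ2 φ1 φ2 (T n))
    (hscheme : ∀ n, 1 ≤ n → n ≤ N - 1 → ∀ p ∈ SBox R1 R2 θ1 θ2 φ1 φ2,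
      (fun v : ℝ → ℝ → ℝ → ℝ => fun r θ φ => v r θ φ - τ / 2 * Drr v r θ φ)
        ((fun v : ℝ → ℝ → ℝ → ℝ => fun r θ φ => v r θ φ - τ / 2 * Dhtt R1 v r θ φ)
          ((fun v : ℝ → ℝ → ℝ → ℝ => fun r θ φ => v r θ φ - τ / 2 * Dhpp R1 θ1 v r θ φ)
            (fun r θ φ => (T (n + 1) r θ φ - T n r θ φ) / τ)))
        p.1 p.2.1 p.2.2
      = lap (fun r θ φ => 3 / 2 * T n r θ φ - 1 / 2 * T (n - 1) r θ φ) p.1 p.2.1 p.2.2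
        - 1 / 2 * laph R1 θ1 (fun r θ φ => T n r θ φ - T (n - 1) r θ φ) p.1 p.2.1 p.2.2) :
    τ * (∑ n ∈ Finset.Icc 1 (N - 1),
        ipw R1 R2 θ1 θ2 φ1 φ2 (fun r θ φ => T (n + 1) r θ φ - T n r θ φ)
          (fun r θ φ => T (n + 1) r θ φ - T n r θ φ) / τ ^ 2)
      + 1 / 2 * gradE R1 R2 θ1 θ2 φ1 φ2 (T N)
      + 1 / 4 * (wnorm R1 R2 θ1 θ2 φ1 φ2 (fun r θ => (r ^ 2 / R1 ^ 2 - 1) * Real.sin θ)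
            (pt (fun r θ φ => T N r θ φ - T (N - 1) r θ φ))
          + wnorm R1 R2 θ1 θ2 φ1 φ2
            (fun r θ => r ^ 2 * Real.sin θ *
              (1 / (R1 ^ 2 * Real.sin θ1 ^ 2) - 1 / (r ^ 2 * Real.sin θ ^ 2)))
            (pp (fun r θ φ => T N r θ φ - T (N - 1) r θ φ)))
    ≤ 1 / 2 * gradE R1 R2 θ1 θ2 φ1 φ2 (T 1)
      + 1 / 4 * (wnorm R1 R2 θ1 θ2 φ1 φ2 (fun r θ => (r ^ 2 / R1 ^ 2 - 1) * Real.sin θ)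
            (pt (fun r θ φ => T 1 r θ φ - T 0 r θ φ))
          + wnorm R1 R2 θ1 θ2 φ1 φ2
            (fun r θ => r ^ 2 * Real.sin θ *
              (1 / (R1 ^ 2 * Real.sin θ1 ^ 2) - 1 / (r ^ 2 * Real.sin θ ^ 2)))
            (pp (fun r θ φ => T 1 r θ φ - T 0 r θ φ))) := by
  let S : Shell := ⟨R1, R2, θ1, θ2, φ1, φ2, hR1, hRR, hθ1, hθθ, hθ2, hφ⟩
  let U : ℕ → ℝ × ℝ × ℝ → ℝ := fun n p => T n p.1 p.2.1 p.2.2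
  have hU : ∀ n ≤ N, S.Rep (T n) (U n) := fun n hn => ⟨hTsm n hn, fun _ _ => rfl⟩
  have hclosed : IsClosed S.box := S.isCompact_box.isClosed
  have hbd : ∀ n ≤ N, ∀ p ∈ S.box, p ∉ S.core → U n p = 0 := fun n hn p hp hpc =>
    hTbd n hn p (by
      change p ∈ frontier S.box
      rw [hclosed.frontier_eq, S.interior_box]
      exact ⟨hp, hpc⟩)
  have hr : ∀ n ≤ N, S.VanishR (U n) := fun n hn p hp h => hbd n hn p hp fun hpc =>
    h.elim hpc.1.1.ne' hpc.1.2.ne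
  have hθ : ∀ n ≤ N, S.Vanishθ (U n) := fun n hn p hp h => hbd n hn p hp fun hpc =>
    h.elim hpc.2.1.1.ne' hpc.2.1.2.ne
  have hφ' : ∀ n ≤ N, S.Vanishφ (U n) := fun n hn p hp h => hbd n hn p hp fun hpc =>
    h.elim hpc.2.2.1.ne' hpc.2.2.2.ne
  have hstep : ∀ n, 1 ≤ n → n ≤ N - 1 →
      τ * (S.ip (fun p => U (n + 1) p - U n p) (fun p => U (n + 1) p - U n p) / τ ^ 2)
        + S.energy (U (n + 1)) (U n) ≤ S.energy (U n) (U (n - 1)) := by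
    intro n hn1 hnN
    have h0 : n - 1 ≤ N := by omega
    have h1 : n ≤ N := by omega
    have h2 : n + 1 ≤ N := by omega
    refine Shell.energy_step hτ hsin (hU _ h2).smooth (hU _ h1).smooth (hU _ h0).smooth
      ((hr _ h2).smul_sub _ (hr _ h1)) ((hθ _ h2).smul_sub _ (hθ _ h1))
      ((hφ' _ h2).smul_sub _ (hφ' _ h1)) fun p hp => ?_
    have hv : S.Rep (fun r θ φ => (T (n + 1) r θ φ - T n r θ φ) / τ)
        (fun p => 1 / τ * (U (n + 1) p - U n p)) := by
      simpa only [div_eq_inv_mul, mul_one] using ((hU _ h2).sub (hU _ h1)).const_mul τ⁻¹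
    have hPφ := hv.sub ((hv.Dhpp R1 θ1).const_mul (τ / 2))
    have hPφ' := hPφ.congr (G := S.Pφ (τ / 2 * (1 / (R1 ^ 2 * Real.sin θ1 ^ 2))) _)
      fun q _ => by simp only [Shell.Pφ, mul_assoc]; rfl
    have hPθ := (hPφ'.sub ((hPφ'.Dhtt R1).const_mul (τ / 2))).congr
      (G := S.Pθ (τ / 2 * (1 / R1 ^ 2)) _) fun q _ => by simp only [Shell.Pθ, mul_assoc]; rfl
    have hPr := hPθ.sub (hPθ.Drr.const_mul (τ / 2))
    have hrhs := ((((hU n h1).const_mul (3 / 2)).sub ((hU (n - 1) h0).const_mul (1 / 2))).lap).sub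
      ((((hU n h1).sub (hU (n - 1) h0)).laph R1 θ1).const_mul (1 / 2))
    exact (hPr.eq p hp).symm.trans
      ((hscheme n hn1 hnN p (S.core_subset_box hp)).trans (hrhs.eq p hp))
  have hsum : ∀ m, m ≤ N - 1 → τ * (∑ n ∈ Finset.Icc 1 m,
      S.ip (fun p => U (n + 1) p - U n p) (fun p => U (n + 1) p - U n p) / τ ^ 2)
        + S.energy (U (m + 1)) (U m) ≤ S.energy (U 1) (U 0) := by
    intro m
    induction m with
    | zero => simp
    | succ m ih =>
      intro hm
      have h1 := ih (by omega)
      have h2 := hstep (m + 1) (by omega) hm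
      rw [Finset.sum_Icc_succ_top (by omega), mul_add]
      simp only [Nat.add_sub_cancel] at h2
      linarith
  have hfinal := hsum (N - 1) le_rfl
  rw [Nat.sub_add_cancel (by omega)] at hfinal
  rw [← (hU N le_rfl).energy (hU (N - 1) (by omega)),
    ← (hU 1 (by omega)).energy (hU 0 (by omega)), ← add_assoc] at hfinal
  convert hfinal using 4
  refine Finset.sum_congr rfl fun n hn => ?_
  have hn' := Finset.mem_Icc.1 hn
  have hW := (hU (n + 1) (by omega)).sub (hU n (by omega))
  rw [← hW.ipw hW]
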